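/- arXiv:2307.01335 — 6 statements merged into one kernel-verified Lean document; each statement's English description precedes it below -/
import Mathlib

section
/- Let c, G > 0 be constants, let a : [0,∞) → ℝ be continuously differentiable with a(t) > 0 for all t, and let M_bh : [0,∞) → ℝ be continuously differentiable with M_bh(t) > 0 for all t. The damping coefficient D(r,t) := (3c² r a(t)a′(t) − 8G M_bh(t) a′(t) + 2G a(t) M_bh′(t)) / (a(t)·(c² r a(t) − 2G M_bh(t))) is independent of the spatial variable, i.e. for every t ≥ 0 and all r₁, r₂ > 2G·M_bh(t)/(c²·a(t)) one has D(r₁,t) = D(r₂,t), if and only if there exists a constant k > 0 with M_bh(t) = k·a(t) for all t ≥ 0. -/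
/-!
With `X = c² r a - 2 G M > 0` outside the horizon, the damping coefficient decomposes as
`D = 3 a'/a + 2 G W / (a X)`, where `W = a M' - M a'`. As `r` ranges over the exterior, `X` takes
every positive value, so `D` is independent of `r` exactly when `W = 0`
(`damping_independent_at_iff`). Since `W / a²` is the derivative of `M / a`, vanishing of `W` on
`[0, ∞)` means that `M / a` is constant there.
-/

/-- Pointwise in time, with `M, A` the mass and scale factor and `M', A'` their derivatives:
independence of `r` is the vanishing of `A M' - M A'`. -/
lemma damping_independent_at_iff {c G A M : ℝ} (A' M' : ℝ) (hc : 0 < c) (hG : 0 < G)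
    (hA : 0 < A) :
    (∀ r₁ r₂ : ℝ, 2 * G * M / (c ^ 2 * A) < r₁ → 2 * G * M / (c ^ 2 * A) < r₂ →
        (3 * c ^ 2 * r₁ * A * A' - 8 * G * M * A' + 2 * G * A * M') /
            (A * (c ^ 2 * r₁ * A - 2 * G * M)) =
          (3 * c ^ 2 * r₂ * A * A' - 8 * G * M * A' + 2 * G * A * M') /
            (A * (c ^ 2 * r₂ * A - 2 * G * M)))
      ↔ A * M' = M * A' := by
  have hcA : 0 < c ^ 2 * A := by positivity
  have decomp : ∀ r : ℝ,
      3 * c ^ 2 * r * A * A' - 8 * G * M * A' + 2 * G * A * M' =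
        3 * A' * (c ^ 2 * r * A - 2 * G * M) + 2 * G * (A * M' - M * A') := by
    intro r; ring
  constructor
  · intro h
    -- The radii at which `X = 1` and `X = 2`.
    have h12 := h ((2 * G * M + 1) / (c ^ 2 * A)) ((2 * G * M + 2) / (c ^ 2 * A))
      (by gcongr; linarith) (by gcongr; linarith)
    have e : ∀ x : ℝ, c ^ 2 * ((2 * G * M + x) / (c ^ 2 * A)) * A - 2 * G * M = x := by
      intro x; field_simp; ring
    rw [decomp, decomp, e, e, div_eq_div_iff (by positivity) (by positivity)] at h12
    have h0 : (A * G) * (A * M' - M * A') = 0 := by linarith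
    have := (mul_eq_zero.mp h0).resolve_left (by positivity)
    linarith
  · intro hW
    have val : ∀ r : ℝ, 2 * G * M / (c ^ 2 * A) < r →
        (3 * c ^ 2 * r * A * A' - 8 * G * M * A' + 2 * G * A * M') /
            (A * (c ^ 2 * r * A - 2 * G * M)) = 3 * A' / A := by
      intro r hr
      rw [div_lt_iff₀ hcA] at hr
      have hX : 0 < c ^ 2 * r * A - 2 * G * M := by linarith
      rw [decomp, hW, sub_self, mul_zero, add_zero]
      exact mul_div_mul_right _ _ hX.ne'
    intro r₁ r₂ h₁ h₂
    rw [val r₁ h₁, val r₂ h₂]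

/-- the damping coefficient of the d'Alembert operator is independent of the
spatial variable `r` (in the exterior of the black hole) if and only if the black-hole mass
is proportional to the scale factor, `M_bh(t) = k·a(t)`. -/
theorem damping_independent_iff_mass_proportional
    (c G : ℝ) (hc : 0 < c) (hG : 0 < G)
    (a Mbh a' Mbh' : ℝ → ℝ)
    (ha : ∀ t ∈ Set.Ici (0:ℝ), HasDerivWithinAt a (a' t) (Set.Ici 0) t)
    (ha'cont : ContinuousOn a' (Set.Ici 0))
    (hMbh : ∀ t ∈ Set.Ici (0:ℝ), HasDerivWithinAt Mbh (Mbh' t) (Set.Ici 0) t)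
    (hMbh'cont : ContinuousOn Mbh' (Set.Ici 0))
    (hapos : ∀ t ∈ Set.Ici (0:ℝ), 0 < a t)
    (hMpos : ∀ t ∈ Set.Ici (0:ℝ), 0 < Mbh t) :
    (∀ t ∈ Set.Ici (0:ℝ), ∀ r₁ r₂ : ℝ,
        2 * G * Mbh t / (c ^ 2 * a t) < r₁ → 2 * G * Mbh t / (c ^ 2 * a t) < r₂ →
        (3 * c ^ 2 * r₁ * a t * a' t - 8 * G * Mbh t * a' t + 2 * G * a t * Mbh' t) /
            (a t * (c ^ 2 * r₁ * a t - 2 * G * Mbh t)) =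
          (3 * c ^ 2 * r₂ * a t * a' t - 8 * G * Mbh t * a' t + 2 * G * a t * Mbh' t) /
            (a t * (c ^ 2 * r₂ * a t - 2 * G * Mbh t)))
      ↔ ∃ k : ℝ, 0 < k ∧ ∀ t ∈ Set.Ici (0:ℝ), Mbh t = k * a t := by
  rw [forall₂_congr fun t ht =>
    damping_independent_at_iff (M := Mbh t) (a' t) (Mbh' t) hc hG (hapos t ht)]
  have h0 : (0 : ℝ) ∈ Set.Ici (0 : ℝ) := Set.self_mem_Ici
  constructor
  · intro hW
    have hderiv : ∀ t ∈ Set.Ici (0 : ℝ),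
        HasDerivWithinAt (fun s => Mbh s / a s) 0 (Set.Ici 0) t := by
      intro t ht
      have hdiv := (hMbh t ht).fun_div (ha t ht) (hapos t ht).ne'
      rwa [mul_comm (Mbh' t), hW t ht, sub_self, zero_div] at hdiv
    refine ⟨Mbh 0 / a 0, div_pos (hMpos 0 h0) (hapos 0 h0), fun t ht => ?_⟩
    -- The mean value inequality with derivative bound `0`.
    have hconst := (convex_Ici (0 : ℝ)).norm_image_sub_le_of_norm_hasDerivWithin_le
      (C := 0) hderiv (fun _ _ => norm_zero.le) h0 ht
    rw [zero_mul, norm_le_zero_iff, sub_eq_zero] at hconst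
    rw [← hconst, div_mul_cancel₀ _ (hapos t ht).ne']
  · rintro ⟨k, -, hk⟩ t ht
    have hd : HasDerivWithinAt Mbh (k * a' t) (Set.Ici 0) t :=
      ((ha t ht).const_mul k).congr hk (hk t ht)
    rw [(uniqueDiffOn_Ici (0 : ℝ) t ht).eq_deriv _ (hMbh t ht) hd, hk t ht]
    ring
end

section
/- Let c > 0 and 0 < R_Sch < R_ID be constants. Let a : [0,∞) → ℝ be continuously differentiable with a(t) > 0 and a′(t) > 0 for all t ≥ 0, and suppose A(t) := ∫₀ᵗ a(s)⁻¹ ds satisfies sup_{t ≥ 0} A(t) < ∞. Then there exist ε > 0 and a unique continuous function r : [0,∞) → ℝ with r(0) = R_ID and R_Sch < r(t) ≤ R_ID for all t, such that R_ID − r(t) − R_Sch·ln(1 − (R_ID − r(t))/(R_ID − R_Sch)) = c·A(t) for all t ∈ [0,∞); moreover r(t) ≥ R_Sch + ε for all t ≥ 0. -/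
/-!
The left-hand side of the implicit equation is `F (r t)`, where
`F x = RID - x - RSch * log (1 - (RID - x) / (RID - RSch))`. On `(RSch, ∞)` the logarithm is
increasing, so `F` decreases at least as fast as `-x`: `|x - y| ≤ |F x - F y|`
(`abs_sub_le_abs_tortoise_sub`). This expansion inequality gives uniqueness of `r` pointwise and
reduces continuity of `r` to that of `A`. Since `F RID = 0` and
`F (RSch + (RID - RSch) * exp (-M / RSch)) ≥ M`, the intermediate value theorem solves
`F x = y` for every `y ∈ [0, M]` at a distance at least `(RID - RSch) * exp (-M / RSch)` from the
horizon; the bound on `A` allows a single `M` for all times.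
-/

/-- The ingoing null coordinate distance from `RID` to `x`, i.e. the left-hand side of the
implicit equation of the geodesic. -/
noncomputable def tortoise (RSch RID x : ℝ) : ℝ :=
  RID - x - RSch * Real.log (1 - (RID - x) / (RID - RSch))

lemma one_sub_div_eq {RSch RID : ℝ} (h : RSch < RID) (x : ℝ) :
    1 - (RID - x) / (RID - RSch) = (x - RSch) / (RID - RSch) := by
  have : RID - RSch ≠ 0 := by linarith
  field_simp
  ring

lemma sub_le_tortoise_sub {RSch RID x y : ℝ} (h0 : 0 < RSch) (h : RSch < RID)
    (hx : RSch < x) (hxy : x ≤ y) :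
    y - x ≤ tortoise RSch RID x - tortoise RSch RID y := by
  have hd : 0 < RID - RSch := by linarith
  have hlog : Real.log ((x - RSch) / (RID - RSch)) ≤ Real.log ((y - RSch) / (RID - RSch)) := by
    apply Real.log_le_log (div_pos (by linarith) hd)
    gcongr
  have := mul_le_mul_of_nonneg_left hlog h0.le
  simp only [tortoise, one_sub_div_eq h]
  linarith

lemma abs_sub_le_abs_tortoise_sub {RSch RID x y : ℝ} (h0 : 0 < RSch) (h : RSch < RID)
    (hx : RSch < x) (hy : RSch < y) :
    |x - y| ≤ |tortoise RSch RID x - tortoise RSch RID y| := by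
  rcases le_total x y with hxy | hxy
  · rw [abs_sub_comm x y, abs_of_nonneg (sub_nonneg.2 hxy)]
    exact (sub_le_tortoise_sub h0 h hx hxy).trans (le_abs_self _)
  · rw [abs_of_nonneg (sub_nonneg.2 hxy), abs_sub_comm]
    exact (sub_le_tortoise_sub h0 h hy hxy).trans (le_abs_self _)

lemma continuousOn_tortoise {RSch RID : ℝ} (h : RSch < RID) :
    ContinuousOn (tortoise RSch RID) (Set.Ioi RSch) := by
  have hd : 0 < RID - RSch := by linarith
  unfold tortoise
  refine ContinuousOn.sub (by fun_prop) (continuousOn_const.mul (ContinuousOn.log (by fun_prop) ?_))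
  intro x hx
  rw [one_sub_div_eq h]
  exact (div_pos (sub_pos.2 hx) hd).ne'

lemma exists_tortoise_eq {RSch RID M y : ℝ} (h0 : 0 < RSch) (h : RSch < RID)
    (hy : 0 ≤ y) (hyM : y ≤ M) :
    ∃ x, RSch + (RID - RSch) * Real.exp (-M / RSch) ≤ x ∧ x ≤ RID ∧ tortoise RSch RID x = y := by
  have hd : 0 < RID - RSch := by linarith
  have he : 0 < (RID - RSch) * Real.exp (-M / RSch) := mul_pos hd (Real.exp_pos _)
  set x₀ := RSch + (RID - RSch) * Real.exp (-M / RSch) with hx₀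
  have hle : x₀ ≤ RID := by
    have : Real.exp (-M / RSch) ≤ 1 :=
      Real.exp_le_one_iff.2 (div_nonpos_of_nonpos_of_nonneg (by linarith) h0.le)
    nlinarith
  have hF₀ : M ≤ tortoise RSch RID x₀ := by
    have h1 : (x₀ - RSch) / (RID - RSch) = Real.exp (-M / RSch) := by
      rw [hx₀]; field_simp; ring
    have h2 : RSch * (-M / RSch) = -M := by field_simp
    rw [tortoise, one_sub_div_eq h, h1, Real.log_exp, h2]
    linarith
  have hF₁ : tortoise RSch RID RID = 0 := by simp [tortoise]
  have hcont : ContinuousOn (tortoise RSch RID) (Set.Icc x₀ RID) :=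
    (continuousOn_tortoise h).mono fun x hx => by
      have := hx.1
      simp only [Set.mem_Ioi]
      linarith
  obtain ⟨x, hx, hxy⟩ := intermediate_value_Icc' hle hcont
    (show y ∈ Set.Icc _ _ from ⟨hF₁.trans_le hy, hyM.trans hF₀⟩)
  exact ⟨x, hx.1, hx.2, hxy⟩

lemma continuousOn_primitive_Ici {g : ℝ → ℝ} (hg : ContinuousOn g (Set.Ici 0)) :
    ContinuousOn (fun t => ∫ s in (0:ℝ)..t, g s) (Set.Ici 0) := by
  -- Extending `g` by the constant `g 0` to negative arguments makes it continuous on all of `ℝ`.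
  have hG : Continuous fun s => g (max s 0) :=
    hg.comp_continuous (by fun_prop) fun s => le_max_right s 0
  have := intervalIntegral.continuous_primitive (μ := MeasureTheory.volume)
    (fun a b => hG.intervalIntegrable a b) 0
  refine this.continuousOn.congr fun t ht => ?_
  refine intervalIntegral.integral_congr fun s hs => ?_
  rw [Set.uIcc_of_le ht] at hs
  simp [max_eq_left hs.1]

/-- global existence of the ingoing null radial geodesic, given implicitly by
`R_ID − r − R_Sch ln(1 − (R_ID − r)/(R_ID − R_Sch)) = c·A(t)`, which stays a positive
distance `ε` away from the event horizon `r = R_Sch` for all time. Uniqueness is among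
continuous functions on `[0,∞)` (agreement on `[0,∞)`). -/
theorem null_geodesic_global_existence
    (c RSch RID : ℝ) (hc : 0 < c) (hRSch : 0 < RSch) (hRID : RSch < RID)
    (a a' : ℝ → ℝ)
    (ha : ∀ t ∈ Set.Ici (0:ℝ), HasDerivWithinAt a (a' t) (Set.Ici 0) t)
    (ha'cont : ContinuousOn a' (Set.Ici 0))
    (hapos : ∀ t ∈ Set.Ici (0:ℝ), 0 < a t)
    (ha'pos : ∀ t ∈ Set.Ici (0:ℝ), 0 < a' t)
    (A : ℝ → ℝ) (hA : ∀ t, A t = ∫ s in (0:ℝ)..t, (a s)⁻¹)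
    (hbdd : ∃ B : ℝ, ∀ t ∈ Set.Ici (0:ℝ), A t ≤ B) :
    ∃ ε > (0:ℝ), ∃ r : ℝ → ℝ,
      (ContinuousOn r (Set.Ici 0) ∧ r 0 = RID ∧
        (∀ t ∈ Set.Ici (0:ℝ), RSch < r t ∧ r t ≤ RID) ∧
        (∀ t ∈ Set.Ici (0:ℝ),
          RID - r t - RSch * Real.log (1 - (RID - r t) / (RID - RSch)) = c * A t)) ∧
      (∀ r' : ℝ → ℝ,
        (ContinuousOn r' (Set.Ici 0) ∧ r' 0 = RID ∧
          (∀ t ∈ Set.Ici (0:ℝ), RSch < r' t ∧ r' t ≤ RID) ∧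
          (∀ t ∈ Set.Ici (0:ℝ),
            RID - r' t - RSch * Real.log (1 - (RID - r' t) / (RID - RSch)) = c * A t)) →
        Set.EqOn r' r (Set.Ici 0)) ∧
      (∀ t ∈ Set.Ici (0:ℝ), RSch + ε ≤ r t) := by
  have hAcont : ContinuousOn A (Set.Ici 0) := by
    have hinv : ContinuousOn (fun s => (a s)⁻¹) (Set.Ici 0) :=
      ContinuousOn.inv₀ (fun t ht => (ha t ht).continuousWithinAt) fun t ht => (hapos t ht).ne'
    exact (continuousOn_primitive_Ici hinv).congr fun t _ => hA t
  have hAnn : ∀ t ∈ Set.Ici (0:ℝ), 0 ≤ A t := fun t ht => by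
    rw [hA]
    exact intervalIntegral.integral_nonneg ht fun s hs => (inv_pos.2 (hapos s hs.1)).le
  obtain ⟨B, hB⟩ := hbdd
  have hd : 0 < RID - RSch := by linarith
  set ε := (RID - RSch) * Real.exp (-(c * B) / RSch) with hε
  have hεpos : 0 < ε := mul_pos hd (Real.exp_pos _)
  have hex : ∀ t : ℝ, ∃ x, t ∈ Set.Ici (0:ℝ) →
      RSch + ε ≤ x ∧ x ≤ RID ∧ tortoise RSch RID x = c * A t := fun t => by
    by_cases ht : t ∈ Set.Ici (0:ℝ)
    · obtain ⟨x, hx⟩ := exists_tortoise_eq hRSch hRID (mul_nonneg hc.le (hAnn t ht))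
        (mul_le_mul_of_nonneg_left (hB t ht) hc.le)
      exact ⟨x, fun _ => hx⟩
    · exact ⟨0, fun h => absurd h ht⟩
  choose r hr using hex
  have hgt : ∀ t ∈ Set.Ici (0:ℝ), RSch < r t := fun t ht => by linarith [(hr t ht).1]
  have huniq : ∀ t ∈ Set.Ici (0:ℝ), ∀ x, RSch < x → tortoise RSch RID x = c * A t → x = r t :=
    fun t ht x hx hxt => by
      have := abs_sub_le_abs_tortoise_sub hRSch hRID hx (hgt t ht)
      rw [hxt, (hr t ht).2.2, sub_self, abs_zero] at this
      exact sub_eq_zero.1 (abs_nonpos_iff.1 this)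
  have hrcont : ContinuousOn r (Set.Ici 0) := by
    have hcA : ContinuousOn (fun t => c * A t) (Set.Ici 0) := continuousOn_const.mul hAcont
    rw [Metric.continuousOn_iff] at hcA ⊢
    intro t ht δ hδ
    obtain ⟨η, hη, H⟩ := hcA t ht δ hδ
    refine ⟨η, hη, fun s hs hst => lt_of_le_of_lt ?_ (H s hs hst)⟩
    have := abs_sub_le_abs_tortoise_sub hRSch hRID (hgt s hs) (hgt t ht)
    rwa [(hr s hs).2.2, (hr t ht).2.2] at this
  refine ⟨ε, hεpos, r, ⟨hrcont, ?_, fun t ht => ⟨hgt t ht, (hr t ht).2.1⟩,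
    fun t ht => (hr t ht).2.2⟩, ?_, fun t ht => (hr t ht).1⟩
  · exact (huniq 0 Set.self_mem_Ici RID hRID (by simp [tortoise, hA])).symm
  · rintro r' ⟨-, -, hr'1, hr'2⟩ t ht
    exact huniq t ht (r' t) (hr'1 t ht).1 (hr'2 t ht)
end

section
/- Let R_s > 0 and define, for x ∈ ℝ³ ∖ {0}, the matrix entries a_kk(x) := −(1 − R_s/|x|)·(R_s x_k²/|x|³ − 2) for k = 1,2,3 and a_kℓ(x) := a_ℓk(x) := −(1 − R_s/|x|)·R_s x_k x_ℓ/|x|³ for k ≠ ℓ. Then for every x ∈ ℝ³ with |x| > R_s and every nonzero ξ ∈ ℝ³: ∑_{i,j=1}^{3} a_{ij}(x) ξ_i ξ_j > 0, i.e. the symmetric matrix (a_ij(x)) is positive definite on the exterior region {|x| > R_s}. -/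
/-!
With `r = ‖x‖`, the quadratic form equals `(1 - Rs/r) * (2‖ξ‖² - (Rs/r³) ⟪x, ξ⟫²)`. The first factor
is positive for `r > Rs`. By Cauchy–Schwarz, `(Rs/r³) ⟪x, ξ⟫² ≤ (Rs/r) ‖ξ‖² ≤ ‖ξ‖²`, so the second
factor is at least `‖ξ‖² > 0`.
-/

/-- The second-order coefficients of the operator `A_{3/2}` obtained from the spatial
Klein–Gordon operator by the Liouville transform. -/
noncomputable def amat (Rs : ℝ) (i j : Fin 3) (x : EuclideanSpace ℝ (Fin 3)) : ℝ :=
  if i = j then -(1 - Rs / ‖x‖) * (Rs * x i ^ 2 / ‖x‖ ^ 3 - 2)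
  else -(1 - Rs / ‖x‖) * (Rs * x i * x j / ‖x‖ ^ 3)

lemma amat_quadratic_form (Rs : ℝ) (x ξ : EuclideanSpace ℝ (Fin 3)) :
    ∑ i : Fin 3, ∑ j : Fin 3, amat Rs i j x * ξ i * ξ j =
      (1 - Rs / ‖x‖) * (2 * ‖ξ‖ ^ 2 - Rs / ‖x‖ ^ 3 * (inner ℝ x ξ) ^ 2) := by
  rw [EuclideanSpace.real_norm_sq_eq ξ]
  simp [Fin.sum_univ_three, amat, PiLp.inner_apply]
  ring

/-- the symmetric matrix `(a_ij(x))` is positive definite on the exterior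
region `{|x| > R_s}`: for `|x| > R_s` and `ξ ≠ 0`, `∑_{i,j} a_ij(x) ξ_i ξ_j > 0`. -/
theorem amat_positive_definite (Rs : ℝ) (hRs : 0 < Rs)
    (x ξ : EuclideanSpace ℝ (Fin 3)) (hx : Rs < ‖x‖) (hξ : ξ ≠ 0) :
    0 < ∑ i : Fin 3, ∑ j : Fin 3, amat Rs i j x * ξ i * ξ j := by
  rw [amat_quadratic_form]
  have hr : 0 < ‖x‖ := hRs.trans hx
  have hq : Rs / ‖x‖ < 1 := (div_lt_one hr).2 hx
  have hn : 0 < ‖ξ‖ ^ 2 := pow_pos (norm_pos_iff.2 hξ) 2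
  have hcs : (inner ℝ x ξ) ^ 2 ≤ (‖x‖ * ‖ξ‖) ^ 2 :=
    sq_le_sq.2 ((abs_real_inner_le_norm x ξ).trans (le_abs_self _))
  have h1 : Rs / ‖x‖ ^ 3 * (inner ℝ x ξ) ^ 2 ≤ Rs / ‖x‖ ^ 3 * (‖x‖ * ‖ξ‖) ^ 2 :=
    mul_le_mul_of_nonneg_left hcs (by positivity)
  have h2 : Rs / ‖x‖ ^ 3 * (‖x‖ * ‖ξ‖) ^ 2 = Rs / ‖x‖ * ‖ξ‖ ^ 2 := by
    field_simp
  have h3 : Rs / ‖x‖ * ‖ξ‖ ^ 2 < 1 * ‖ξ‖ ^ 2 := mul_lt_mul_of_pos_right hq hn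
  exact mul_pos (by linarith) (by linarith)
end

section
/- Let R_s > 0, Ω := {x ∈ ℝ³ : |x| > R_s}, and define (A_{3/2}v)(x) := ∑_{i,j=1}^{3} a_{ij}(x) ∂_i∂_j v(x) + (R_s²/(4|x|⁴))·v(x), where a_kk(x) := −(1 − R_s/|x|)·(R_s x_k²/|x|³ − 2) and a_kℓ(x) := −(1 − R_s/|x|)·R_s x_k x_ℓ/|x|³ for k ≠ ℓ. Then for every real-valued v ∈ C_c^∞(Ω): ∫_{ℝ³} (A_{3/2}v)(x)·v(x) dx ≤ 0; that is, A_{3/2} is non-positive on smooth real functions compactly supported in the exterior of the black hole. -/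
/-!
Write `r = |x|`, `f = 1 - R_s / r`, `p = ∇v`. The coefficient matrix is
`a = f (2 I - (R_s / r³) x xᵀ)`, and `∑ ∂_i ∂_j a_ij = 0`, so integrating by parts turns the claim
into `∫ R_s² / (4 r⁴) v² ≤ ∫ ∑ a_ij p_i p_j`. Since `a ≥ f²` in the radial direction, this follows
from the one-dimensional Hardy inequality `∫ (r - R_s)² (∂_r v)² dr ≥ ¼ ∫ v² dr` and `R_s ≤ r`.

All of this is packaged in a single pointwise identity (`A32r_mul_eq`): with the vector field
`W = fluxField`, combining the fluxes of the two integrations by parts and of the Hardy inequality,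
`div W = (A_{3/2} v) v + f (2 |p|² - (x·p)² / r²) + (f (x·p) / r + v / (2 r))²
  + (1 / (4 r²)) (1 - R_s² / r²) v²`.
The last three terms are nonnegative on the exterior region, and `∫ div W = 0` because `W` is smooth
with compact support.
-/

open MeasureTheory

/-- Partial derivative in the `i`-th coordinate direction of a real-valued function. -/
noncomputable def pdr (i : Fin 3) (u : EuclideanSpace ℝ (Fin 3) → ℝ)
    (x : EuclideanSpace ℝ (Fin 3)) : ℝ :=
  fderiv ℝ u x (EuclideanSpace.single i 1)

/-- The operator `A_{3/2} v = ∑_{i,j} a_ij ∂_i∂_j v + (R_s²/(4|x|⁴)) v` (real version). -/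
noncomputable def A32r (Rs : ℝ) (u : EuclideanSpace ℝ (Fin 3) → ℝ)
    (x : EuclideanSpace ℝ (Fin 3)) : ℝ :=
  (∑ i : Fin 3, ∑ j : Fin 3, amat Rs i j x * pdr i (pdr j u) x) +
    Rs ^ 2 / (4 * ‖x‖ ^ 4) * u x

/-- The vector field whose divergence dominates `(A_{3/2} v) v` on the exterior region:
`W_i = ∑_j a_ij ∂_j v · v - (R_s / (2 r³)) x_i v² + ((r - R_s) / (2 r³)) x_i v²`,
written as a polynomial in `r⁻¹`, the coordinates, `v` and its first derivatives. -/
noncomputable def fluxField (Rs : ℝ) (v : EuclideanSpace ℝ (Fin 3) → ℝ) (i : Fin 3)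
    (x : EuclideanSpace ℝ (Fin 3)) : ℝ :=
  2 * (1 - Rs * ‖x‖⁻¹) * pdr i v x * v x
    - (1 - Rs * ‖x‖⁻¹) * Rs * ‖x‖⁻¹ ^ 3 * x i
        * (x 0 * pdr 0 v x + x 1 * pdr 1 v x + x 2 * pdr 2 v x) * v x
    + (‖x‖⁻¹ ^ 2 - 2 * Rs * ‖x‖⁻¹ ^ 3) / 2 * x i * v x ^ 2

lemma contDiff_pdr {v : EuclideanSpace ℝ (Fin 3) → ℝ} (hv : ContDiff ℝ (⊤ : ℕ∞) v) (i : Fin 3) :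
    ContDiff ℝ (⊤ : ℕ∞) (pdr i v) := by
  unfold pdr
  exact (hv.fderiv_right (m := (⊤ : ℕ∞)) (by simp)).clm_apply contDiff_const

lemma contDiffAt_fluxField (Rs : ℝ) {v : EuclideanSpace ℝ (Fin 3) → ℝ}
    (hv : ContDiff ℝ (⊤ : ℕ∞) v) (i : Fin 3) {x : EuclideanSpace ℝ (Fin 3)} (hx : x ≠ 0) :
    ContDiffAt ℝ (⊤ : ℕ∞) (fluxField Rs v i) x := by
  have hs : ContDiffAt ℝ (⊤ : ℕ∞) (fun y : EuclideanSpace ℝ (Fin 3) => ‖y‖⁻¹) x :=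
    (contDiffAt_norm ℝ hx).inv (norm_ne_zero_iff.mpr hx)
  have hc (j : Fin 3) : ContDiffAt ℝ (⊤ : ℕ∞) (fun y : EuclideanSpace ℝ (Fin 3) => y j) x := by
    fun_prop
  have hp (j : Fin 3) : ContDiffAt ℝ (⊤ : ℕ∞) (pdr j v) x := (contDiff_pdr hv j).contDiffAt
  have hv' : ContDiffAt ℝ (⊤ : ℕ∞) v x := hv.contDiffAt
  have hf := (contDiffAt_const (c := (1 : ℝ))).sub ((contDiffAt_const (c := Rs)).mul hs)
  exact ((((contDiffAt_const (c := (2 : ℝ))).mul hf).mul (hp i)).mul hv' |>.sub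
    ((((((hf.mul (contDiffAt_const (c := Rs))).mul (hs.pow 3)).mul (hc i)).mul
      ((((hc 0).mul (hp 0)).add ((hc 1).mul (hp 1))).add ((hc 2).mul (hp 2)))).mul hv'))).add
    (((((hs.pow 2).sub ((contDiffAt_const (c := 2 * Rs)).mul (hs.pow 3))).div_const 2).mul
      (hc i)).mul (hv'.pow 2))

lemma contDiff_fluxField {Rs : ℝ} (hRs : 0 < Rs) {v : EuclideanSpace ℝ (Fin 3) → ℝ}
    (hv : ContDiff ℝ (⊤ : ℕ∞) v)
    (hvΩ : tsupport v ⊆ {x : EuclideanSpace ℝ (Fin 3) | Rs < ‖x‖}) (i : Fin 3) :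
    ContDiff ℝ (⊤ : ℕ∞) (fluxField Rs v i) := by
  rw [contDiff_iff_contDiffAt]
  intro x
  by_cases hx : x ∈ tsupport v
  · exact contDiffAt_fluxField Rs hv i (norm_pos_iff.mp (hRs.trans (hvΩ hx)))
  · have h0 := notMem_tsupport_iff_eventuallyEq.mp hx
    refine (contDiffAt_const (c := (0 : ℝ))).congr_of_eventuallyEq ?_
    filter_upwards [h0] with y hy
    simp [fluxField, hy]

lemma hasCompactSupport_fluxField (Rs : ℝ) {v : EuclideanSpace ℝ (Fin 3) → ℝ}
    (hvcs : HasCompactSupport v) (i : Fin 3) : HasCompactSupport (fluxField Rs v i) := by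
  refine hvcs.mono fun x hx => ?_
  contrapose hx
  simp only [Function.mem_support, not_not] at hx ⊢
  simp [fluxField, hx]

lemma integrable_pdr_of_hasCompactSupport {w : EuclideanSpace ℝ (Fin 3) → ℝ}
    (hw : ContDiff ℝ (⊤ : ℕ∞) w) (hc : HasCompactSupport w) (i : Fin 3) :
    Integrable (pdr i w) :=
  (contDiff_pdr hw i).continuous.integrable_of_hasCompactSupport (hc.fderiv_apply ℝ _)

lemma integral_pdr_eq_zero {w : EuclideanSpace ℝ (Fin 3) → ℝ}
    (hw : ContDiff ℝ (⊤ : ℕ∞) w) (hc : HasCompactSupport w) (i : Fin 3) :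
    ∫ x, pdr i w x = 0 := by
  have h := integral_mul_fderiv_eq_neg_fderiv_mul_of_integrable (μ := volume) (𝕜 := ℝ)
    (f := fun _ : EuclideanSpace ℝ (Fin 3) => (1 : ℝ)) (g := w)
    (v := EuclideanSpace.single i (1 : ℝ)) (by simp)
    (by simp only [one_mul]; exact integrable_pdr_of_hasCompactSupport hw hc i)
    (by simpa using hw.continuous.integrable_of_hasCompactSupport hc)
    (fun _ _ => differentiableAt_const _) (fun x _ => hw.differentiable (by simp) x)
  simpa [pdr] using h

lemma hasDerivAt_line {w : EuclideanSpace ℝ (Fin 3) → ℝ} {x : EuclideanSpace ℝ (Fin 3)}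
    (hw : DifferentiableAt ℝ w x) (i : Fin 3) :
    HasDerivAt (fun t : ℝ => w (x + t • EuclideanSpace.single i (1 : ℝ))) (pdr i w x) 0 :=
  hw.hasFDerivAt.hasLineDerivAt _

lemma pdr_norm_inv {x : EuclideanSpace ℝ (Fin 3)} (hx : x ≠ 0) (i : Fin 3) :
    pdr i (fun y => ‖y‖⁻¹) x = -(x i * ‖x‖⁻¹ ^ 3) := by
  have hr : ‖x‖ ≠ 0 := norm_ne_zero_iff.mpr hx
  have hd : DifferentiableAt ℝ (fun y : EuclideanSpace ℝ (Fin 3) => ‖y‖) x :=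
    (contDiffAt_norm ℝ hx (n := 1)).differentiableAt (by simp)
  have h1 : pdr i (fun y => ‖y‖ ^ 2) x = 2 * x i := by
    simp [pdr, EuclideanSpace.inner_single_right]
  have h2 := hasDerivAt_line hd i
  have h3 := (hasDerivAt_line (hd.pow 2) i).unique (h2.pow 2)
  have h4 := (hasDerivAt_line (hd.inv hr) i).unique (h2.inv (by simpa using hr))
  have h5 : pdr i ((fun y : EuclideanSpace ℝ (Fin 3) => ‖y‖) ^ 2) x = 2 * x i := h1
  rw [h5] at h3
  simp at h3
  have h6 : pdr i (fun y : EuclideanSpace ℝ (Fin 3) => ‖y‖) x = x i / ‖x‖ := by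
    field_simp
    linarith
  have h7 : pdr i (fun y : EuclideanSpace ℝ (Fin 3) => ‖y‖⁻¹) x = _ := h4
  rw [h7, h6]
  simp
  field_simp

lemma pdr_coord (i j : Fin 3) (x : EuclideanSpace ℝ (Fin 3)) :
    pdr i (fun y => y j) x = if j = i then 1 else 0 := by
  have : (fun y : EuclideanSpace ℝ (Fin 3) => y j)
      = (EuclideanSpace.proj j : EuclideanSpace ℝ (Fin 3) →L[ℝ] ℝ) := rfl
  unfold pdr
  rw [this, ContinuousLinearMap.fderiv]
  simp

/-- The product rule for the components of `fluxField`, with `x · ∇v` differentiated termwise. -/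
lemma pdr_fluxField (Rs : ℝ) {v : EuclideanSpace ℝ (Fin 3) → ℝ} (hv : ContDiff ℝ (⊤ : ℕ∞) v)
    (i : Fin 3) {x : EuclideanSpace ℝ (Fin 3)} (hx : x ≠ 0) (s : ℝ) (hs : s = ‖x‖⁻¹) :
    pdr i (fluxField Rs v i) x =
      2 * (1 - Rs * s) * (pdr i (pdr i v) x * v x + pdr i v x ^ 2)
      + 2 * Rs * (x i * s ^ 3) * pdr i v x * v x
      - (Rs * x i * s ^ 3 * (Rs * s ^ 3) + (1 - Rs * s) * Rs * (-3 * x i * s ^ 5)) * x i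
          * (x 0 * pdr 0 v x + x 1 * pdr 1 v x + x 2 * pdr 2 v x) * v x
      - (1 - Rs * s) * Rs * s ^ 3
          * (x 0 * pdr 0 v x + x 1 * pdr 1 v x + x 2 * pdr 2 v x) * (v x + x i * pdr i v x)
      - (1 - Rs * s) * Rs * s ^ 3 * x i * v x
          * (pdr i v x + x 0 * pdr i (pdr 0 v) x + x 1 * pdr i (pdr 1 v) x
            + x 2 * pdr i (pdr 2 v) x)
      + (-2 * x i * s ^ 4 + 6 * Rs * x i * s ^ 5) / 2 * x i * v x ^ 2
      + (s ^ 2 - 2 * Rs * s ^ 3) / 2 * (v x ^ 2 + 2 * x i * v x * pdr i v x) := by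
  have hn : ‖x‖ ≠ 0 := norm_ne_zero_iff.mpr hx
  have hsd : DifferentiableAt ℝ (fun y : EuclideanSpace ℝ (Fin 3) => ‖y‖⁻¹) x :=
    ((contDiffAt_norm ℝ hx (n := 1)).differentiableAt (by simp)).inv hn
  have ds := hasDerivAt_line hsd i
  rw [pdr_norm_inv hx] at ds
  have dc (j : Fin 3) := hasDerivAt_line (w := fun y => y j) (x := x) (by fun_prop) i
  simp only [pdr_coord] at dc
  have dp (j : Fin 3) := hasDerivAt_line ((contDiff_pdr hv j).differentiable (by simp) x) i
  have dv := hasDerivAt_line (hv.differentiable (by simp) x) i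
  have df := (hasDerivAt_const (0 : ℝ) (1 : ℝ)).sub ((hasDerivAt_const (0 : ℝ) Rs).mul ds)
  have key := ((((hasDerivAt_const (0 : ℝ) (2 : ℝ)).mul df).mul (dp i)).mul dv |>.sub
    ((((((df.mul (hasDerivAt_const (0 : ℝ) Rs)).mul (ds.pow 3)).mul (dc i)).mul
      ((((dc 0).mul (dp 0)).add ((dc 1).mul (dp 1))).add ((dc 2).mul (dp 2)))).mul dv))).add
    (((((ds.pow 2).sub ((hasDerivAt_const (0 : ℝ) (2 * Rs)).mul (ds.pow 3))).div_const 2).mul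
      (dc i)).mul (dv.pow 2))
  have hW := hasDerivAt_line
    ((contDiffAt_fluxField Rs hv i hx).differentiableAt (by simp)) i
  rw [hW.unique key]
  simp only [Pi.mul_apply, Pi.add_apply, Pi.sub_apply, Pi.pow_apply, zero_smul, add_zero, ← hs]
  fin_cases i <;> simp <;> ring

/-- The pointwise identity behind the theorem, with `s = 1 / |x|`. -/
lemma A32r_mul_eq (Rs : ℝ) {v : EuclideanSpace ℝ (Fin 3) → ℝ} (hv : ContDiff ℝ (⊤ : ℕ∞) v)
    {x : EuclideanSpace ℝ (Fin 3)} (hx : x ≠ 0) (s : ℝ) (hs : s = ‖x‖⁻¹) :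
    ∑ i, pdr i (fluxField Rs v i) x = A32r Rs v x * v x
      + (1 - Rs * s) * (2 * (pdr 0 v x ^ 2 + pdr 1 v x ^ 2 + pdr 2 v x ^ 2)
          - s ^ 2 * (x 0 * pdr 0 v x + x 1 * pdr 1 v x + x 2 * pdr 2 v x) ^ 2)
      + ((1 - Rs * s) * s * (x 0 * pdr 0 v x + x 1 * pdr 1 v x + x 2 * pdr 2 v x)
          + s * v x / 2) ^ 2
      + s ^ 2 / 4 * (1 - Rs ^ 2 * s ^ 2) * v x ^ 2 := by
  have hn : ‖x‖ ≠ 0 := norm_ne_zero_iff.mpr hx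
  have h1 : s ^ 2 * (x 0 ^ 2 + x 1 ^ 2 + x 2 ^ 2) = 1 := by
    have := EuclideanSpace.real_norm_sq_eq x
    rw [Fin.sum_univ_three] at this
    rw [← this, hs]
    field_simp
  have ha : A32r Rs v x = (∑ i : Fin 3, ∑ j : Fin 3, (if i = j then
      -(1 - Rs * s) * (Rs * x i ^ 2 * s ^ 3 - 2) else -(1 - Rs * s) * (Rs * x i * x j * s ^ 3))
        * pdr i (pdr j v) x) + Rs ^ 2 * s ^ 4 / 4 * v x := by
    simp only [A32r, amat, hs, div_eq_mul_inv, mul_inv, inv_pow]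
    ring
  rw [ha]
  simp only [Fin.sum_univ_three, pdr_fluxField Rs hv _ hx s hs]
  simp
  generalize pdr 0 (pdr 0 v) x = q00
  generalize pdr 0 (pdr 1 v) x = q01
  generalize pdr 0 (pdr 2 v) x = q02
  generalize pdr 1 (pdr 0 v) x = q10
  generalize pdr 1 (pdr 1 v) x = q11
  generalize pdr 1 (pdr 2 v) x = q12
  generalize pdr 2 (pdr 0 v) x = q20
  generalize pdr 2 (pdr 1 v) x = q21
  generalize pdr 2 (pdr 2 v) x = q22
  generalize pdr 0 v x = p0
  generalize pdr 1 v x = p1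
  generalize pdr 2 v x = p2
  generalize v x = u
  generalize x 0 = a at *
  generalize x 1 = b at *
  generalize x 2 = c at *
  linear_combination ((a * p0 + b * p1 + c * p2) * u * (-Rs ^ 2 * s ^ 4 + 3 * (1 - Rs * s) * Rs * s ^ 3)
    + u ^ 2 * (-s ^ 2 + 3 * Rs * s ^ 3)) * h1

lemma A32r_mul_le {Rs : ℝ} (hRs : 0 < Rs) {v : EuclideanSpace ℝ (Fin 3) → ℝ}
    (hv : ContDiff ℝ (⊤ : ℕ∞) v) {x : EuclideanSpace ℝ (Fin 3)} (hx : Rs < ‖x‖) :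
    A32r Rs v x * v x ≤ ∑ i, pdr i (fluxField Rs v i) x := by
  have hr : 0 < ‖x‖ := hRs.trans hx
  rw [A32r_mul_eq Rs hv (norm_pos_iff.mp hr) _ rfl]
  have hs : 0 < ‖x‖⁻¹ := inv_pos.mpr hr
  have hRs1 : Rs * ‖x‖⁻¹ < 1 := by
    rw [← div_eq_mul_inv, div_lt_one hr]; exact hx
  have h1 : ‖x‖⁻¹ ^ 2 * (x 0 ^ 2 + x 1 ^ 2 + x 2 ^ 2) = 1 := by
    have := EuclideanSpace.real_norm_sq_eq x
    rw [Fin.sum_univ_three] at this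
    rw [← this]
    field_simp
  generalize ‖x‖⁻¹ = s at *
  generalize pdr 0 v x = p0
  generalize pdr 1 v x = p1
  generalize pdr 2 v x = p2
  generalize v x = u
  generalize x 0 = a at *
  generalize x 1 = b at *
  generalize x 2 = c at *
  -- Cauchy–Schwarz in the form of Lagrange's identity
  have hCS : s ^ 2 * (a * p0 + b * p1 + c * p2) ^ 2 ≤ p0 ^ 2 + p1 ^ 2 + p2 ^ 2 := by
    have : 0 ≤ s ^ 2 * ((a * p1 - b * p0) ^ 2 + (a * p2 - c * p0) ^ 2 + (b * p2 - c * p1) ^ 2) := by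
      positivity
    linear_combination this + (p0 ^ 2 + p1 ^ 2 + p2 ^ 2) * h1
  have hA : 0 ≤ (1 - Rs * s) * (2 * (p0 ^ 2 + p1 ^ 2 + p2 ^ 2)
      - s ^ 2 * (a * p0 + b * p1 + c * p2) ^ 2) :=
    mul_nonneg (by linarith) (by linarith [sq_nonneg p0, sq_nonneg p1, sq_nonneg p2])
  have hB : 0 ≤ 1 - Rs ^ 2 * s ^ 2 := by nlinarith [mul_pos hRs hs]
  have hC : 0 ≤ s ^ 2 / 4 * (1 - Rs ^ 2 * s ^ 2) * u ^ 2 := by positivity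
  linarith [sq_nonneg ((1 - Rs * s) * s * (a * p0 + b * p1 + c * p2) + s * u / 2)]

/-- `A_{3/2}` is non-positive on smooth real-valued functions compactly
supported in the exterior `Ω = {|x| > R_s}` of the black hole:
`∫ (A_{3/2}v)·v ≤ 0`. -/
theorem A32_nonpositive (Rs : ℝ) (hRs : 0 < Rs)
    (v : EuclideanSpace ℝ (Fin 3) → ℝ)
    (hv : ContDiff ℝ (⊤ : ℕ∞) v) (hvcs : HasCompactSupport v)
    (hvΩ : tsupport v ⊆ {x : EuclideanSpace ℝ (Fin 3) | Rs < ‖x‖}) :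
    (∫ x : EuclideanSpace ℝ (Fin 3), A32r Rs v x * v x) ≤ 0 := by
  have hW := contDiff_fluxField hRs hv hvΩ
  have hWc := hasCompactSupport_fluxField Rs hvcs
  -- a non-integrable integrand has integral `0` by convention
  by_cases hint : Integrable (fun x => A32r Rs v x * v x)
  swap
  · exact (integral_undef hint).le
  calc (∫ x, A32r Rs v x * v x) ≤ ∫ x, ∑ i, pdr i (fluxField Rs v i) x := by
        refine integral_mono hint (integrable_finsetSum _ fun i _ =>
          integrable_pdr_of_hasCompactSupport (hW i) (hWc i) i) fun x => ?_
        by_cases hx : x ∈ tsupport v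
        · exact A32r_mul_le hRs hv (hvΩ hx)
        · have h0 := notMem_tsupport_iff_eventuallyEq.mp hx
          have hz (i : Fin 3) : pdr i (fluxField Rs v i) x = 0 := by
            have : fluxField Rs v i =ᶠ[nhds x] fun _ => (0 : ℝ) := by
              filter_upwards [h0] with y hy
              simp [fluxField, hy]
            simp [pdr, this.fderiv_eq]
          simp [hz, image_eq_zero_of_notMem_tsupport hx]
    _ = ∑ i, ∫ x, pdr i (fluxField Rs v i) x :=
        integral_finsetSum _ fun i _ => integrable_pdr_of_hasCompactSupport (hW i) (hWc i) i
    _ = 0 := by simp [integral_pdr_eq_zero (hW _) (hWc _)]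
end

section
/- Let H > 0 and M ∈ ℂ. For every t > 0 and r ≥ 0 with H·r < 1 − e^{−Ht}, the kernel K₀ satisfies K₀(r,t;M) = [4^{−M/H}·e^{Mt}·((e^{−Ht}+1)² − H²r²)^{M/H − 1/2} / ((1 − e^{−Ht})² − H²r²)] · [ (H e^{−Ht} − H + M e^{−2Ht} − M − H²M r²)·₂F₁(1/2 − M/H, 1/2 − M/H; 1; ζ) + (H/2 + M)·(H²r² − e^{−2Ht} + 1)·₂F₁(−1/2 − M/H, 1/2 − M/H; 1; ζ) ], where ζ := ((e^{−Ht} − 1)² − H²r²)/((e^{−Ht} + 1)² − H²r²) ∈ [0,1). -/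
/-!
With `a = 1/2 - M/H`, `D(b) = (e^{-Hb} + e^{-Ht})² - H²r²` and `N(b) = (e^{-Hb} - e^{-Ht})² - H²r²`,
the kernel is `E = 4^{-M/H} e^{M(b+t)} D^{-a} F(N/D)`, where `F = ₂F₁(a, a; 1; ·)`. Differentiating
at `b = 0` produces `F` and `F'` at `ζ = N/D`, and `F'` is eliminated through the contiguity relation
`ζ (1 - ζ) F'(ζ) = (1 - a) ₂F₁(a - 1, a; 1; ζ) + (a - 1 + a ζ) F(ζ)`
(`hyp_contiguous`), which is a comparison of power series coefficients. The hypothesis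
`H r < 1 - e^{-Ht}` makes `N` and `D` positive, so that `0 < ζ < 1`; with `y = e^{-Ht}`, the identities
`ζ (1 - ζ) = 4 y N / D²` and `ζ' = -4 H y (1 - y² + H²r²) / D²` reduce the claim to algebra.

Termwise differentiation of the series (`hyp_hasDerivAt`) rests on the ratio test.
-/

/-- The Gauss hypergeometric function `₂F₁(a,b;c;z) = ∑ (a)ₙ(b)ₙ/((c)ₙ n!) zⁿ`. -/
noncomputable def hyp (a b c z : ℂ) : ℂ :=
  ∑' n : ℕ, ((ascPochhammer ℂ n).eval a * (ascPochhammer ℂ n).eval b /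
    ((ascPochhammer ℂ n).eval c * (n.factorial : ℂ))) * z ^ n

/-- The kernel `E(r,t;0,b;M)` of the integral transform for the Klein–Gordon equation in
de Sitter space-time. -/
noncomputable def Eker (H : ℝ) (M : ℂ) (r t b : ℝ) : ℂ :=
  (4 : ℂ) ^ (-(M / (H : ℂ))) * Complex.exp (M * ((b : ℂ) + (t : ℂ))) *
    ((((Real.exp (-(H * b)) + Real.exp (-(H * t))) ^ 2 - H ^ 2 * r ^ 2 : ℝ)) : ℂ) ^
      (M / (H : ℂ) - 1 / 2) *
    hyp (1 / 2 - M / (H : ℂ)) (1 / 2 - M / (H : ℂ)) 1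
      ((((Real.exp (-(H * b)) - Real.exp (-(H * t))) ^ 2 - H ^ 2 * r ^ 2) /
        ((Real.exp (-(H * b)) + Real.exp (-(H * t))) ^ 2 - H ^ 2 * r ^ 2) : ℝ) : ℂ)

/-- The kernel `K₁(r,t;M) = E(r,t;0,0;M)`. -/
noncomputable def K1 (H : ℝ) (M : ℂ) (r t : ℝ) : ℂ := Eker H M r t 0

/-- The kernel `K₀(r,t;M) = −∂_b E(r,t;0,b;M)|_{b=0}`. -/
noncomputable def K0 (H : ℝ) (M : ℂ) (r t : ℝ) : ℂ := -deriv (fun b => Eker H M r t b) 0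

/-- The `n`-th coefficient of `₂F₁(a, b; 1; z)`. -/
noncomputable def hypCoeff (a b : ℂ) (n : ℕ) : ℂ :=
  (ascPochhammer ℂ n).eval a * (ascPochhammer ℂ n).eval b /
    ((ascPochhammer ℂ n).eval 1 * (n.factorial : ℂ))

lemma hypCoeff_zero (a b : ℂ) : hypCoeff a b 0 = 1 := by
  simp [hypCoeff]

lemma hypCoeff_succ (a b : ℂ) (n : ℕ) :
    hypCoeff a b (n + 1) = hypCoeff a b n * ((a + n) * (b + n) / ((n : ℂ) + 1) ^ 2) := by
  have h1 : (n.factorial : ℂ) ≠ 0 := by exact_mod_cast n.factorial_ne_zero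
  have h2 : (n : ℂ) + 1 ≠ 0 := by exact_mod_cast n.succ_ne_zero
  rw [hypCoeff, hypCoeff, ascPochhammer_succ_eval, ascPochhammer_succ_eval, ascPochhammer_eval_one,
    ascPochhammer_eval_one, Nat.factorial_succ]
  push_cast
  field_simp

/-- Lowering the first parameter: this holds because `(a - 1)ₙ₊₁ = (a - 1) (a)ₙ`. -/
lemma hypCoeff_sub_one_succ (a b : ℂ) (n : ℕ) :
    hypCoeff (a - 1) b (n + 1) = hypCoeff a b n * ((a - 1) * (b + n) / ((n : ℂ) + 1) ^ 2) := by
  have h1 : (n.factorial : ℂ) ≠ 0 := by exact_mod_cast n.factorial_ne_zero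
  have h2 : (n : ℂ) + 1 ≠ 0 := by exact_mod_cast n.succ_ne_zero
  have h3 : (ascPochhammer ℂ (n + 1)).eval (a - 1) = (a - 1) * (ascPochhammer ℂ n).eval a := by
    rw [ascPochhammer_succ_left]
    simp [Polynomial.eval_comp]
  rw [hypCoeff, hypCoeff, h3, ascPochhammer_succ_eval, ascPochhammer_eval_one,
    ascPochhammer_eval_one, Nat.factorial_succ]
  push_cast
  field_simp

/-- The factor `n + 1` gives a majorant both for the series and for its termwise derivative. -/
lemma summable_hypCoeff (a b z : ℂ) (hz : ‖z‖ < 1) :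
    Summable fun n : ℕ => ‖((n : ℂ) + 1) * hypCoeff a b n * z ^ n‖ := by
  have key (c : ℂ) : Filter.Tendsto (fun n : ℕ => (c + n) / ((n : ℂ) + 1)) Filter.atTop
      (nhds 1) := by
    have := tendsto_add_mul_div_add_mul_atTop_nhds c 1 (1 : ℂ) (one_ne_zero (α := ℂ))
    simpa [add_comm (1 : ℂ)] using this
  have hlim : Filter.Tendsto (fun n : ℕ => ‖(2 + (n : ℂ)) / ((n : ℂ) + 1) *
      ((a + n) / ((n : ℂ) + 1)) * ((b + n) / ((n : ℂ) + 1)) * z‖) Filter.atTop (nhds ‖z‖) := by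
    simpa using ((((key 2).mul (key a)).mul (key b)).mul_const z).norm
  obtain ⟨ρ, h1, h2⟩ := exists_between hz
  refine summable_of_ratio_norm_eventually_le h2 ?_
  filter_upwards [hlim.eventually_le_const h1] with n hn
  have h3 : (n : ℂ) + 1 ≠ 0 := by exact_mod_cast n.succ_ne_zero
  have h4 : (((n + 1 : ℕ) : ℂ) + 1) * hypCoeff a b (n + 1) * z ^ (n + 1) =
      ((2 + (n : ℂ)) / ((n : ℂ) + 1) * ((a + n) / ((n : ℂ) + 1)) * ((b + n) / ((n : ℂ) + 1)) * z) *
        (((n : ℂ) + 1) * hypCoeff a b n * z ^ n) := by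
    rw [hypCoeff_succ, pow_succ]
    push_cast
    field_simp
    ring
  rw [h4, norm_norm, norm_norm, norm_mul]
  exact mul_le_mul_of_nonneg_right hn (norm_nonneg _)

lemma norm_natCast_add_one (n : ℕ) : ‖(n : ℂ) + 1‖ = n + 1 := by
  exact_mod_cast Complex.norm_natCast (n + 1)

lemma hyp_hasSum (a b z : ℂ) (hz : ‖z‖ < 1) :
    HasSum (fun n : ℕ => hypCoeff a b n * z ^ n) (hyp a b 1 z) := by
  refine Summable.hasSum (.of_norm_bounded (summable_hypCoeff a b z hz) fun n => ?_)
  rw [mul_assoc, norm_mul ((n : ℂ) + 1), norm_natCast_add_one]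
  have := n.cast_nonneg (α := ℝ)
  nlinarith [norm_nonneg (hypCoeff a b n * z ^ n)]

lemma hyp_hasDerivAt (a b z : ℂ) (hz : ‖z‖ < 1) :
    ∃ F' : ℂ, HasDerivAt (hyp a b 1) F' z ∧
      HasSum (fun n : ℕ => (n : ℂ) * hypCoeff a b n * z ^ n) (z * F') := by
  obtain ⟨ρ, h1, h2⟩ := exists_between hz
  have hρ : 0 < ρ := (norm_nonneg z).trans_lt h1
  have hρn : ‖(ρ : ℂ)‖ = ρ := by simp [hρ.le]
  have hs := (summable_hypCoeff a b ρ (by rwa [hρn])).mul_left ρ⁻¹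
  have bound (n : ℕ) (y : ℂ) (hy : y ∈ Metric.ball (0 : ℂ) ρ) :
      ‖hypCoeff a b n * ((n : ℂ) * y ^ (n - 1))‖ ≤
        ρ⁻¹ * ‖((n : ℂ) + 1) * hypCoeff a b n * (ρ : ℂ) ^ n‖ := by
    have hy' : ‖y‖ ≤ ρ := (mem_ball_zero_iff.1 hy).le
    rw [norm_mul, norm_mul, norm_mul, norm_mul, norm_pow, norm_pow, hρn, norm_natCast_add_one,
      Complex.norm_natCast]
    rcases n with _ | n
    · simp only [Nat.cast_zero, zero_mul, mul_zero]
      positivity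
    · have e : ρ⁻¹ * ((((n + 1 : ℕ) : ℝ) + 1) * ‖hypCoeff a b (n + 1)‖ * ρ ^ (n + 1)) =
          ‖hypCoeff a b (n + 1)‖ * ((((n + 1 : ℕ) : ℝ) + 1) * ρ ^ n) := by
        field_simp
        ring
      rw [e, Nat.add_sub_cancel]
      gcongr
      linarith
  have hzm : z ∈ Metric.ball (0 : ℂ) ρ := mem_ball_zero_iff.2 h1
  have hd := hasDerivAt_tsum_of_isPreconnected (g := fun (n : ℕ) (y : ℂ) => hypCoeff a b n * y ^ n)
    (g' := fun n y => hypCoeff a b n * ((n : ℂ) * y ^ (n - 1))) hs Metric.isOpen_ball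
    (convex_ball (0 : ℂ) ρ).isPreconnected
    (fun n y _ => (hasDerivAt_pow n y).const_mul _) bound hzm (hyp_hasSum a b z hz).summable hzm
  refine ⟨_, hd, ?_⟩
  have hsum : Summable fun n : ℕ => hypCoeff a b n * ((n : ℂ) * z ^ (n - 1)) :=
    .of_norm_bounded hs fun n => bound n z hzm
  refine (hsum.hasSum.mul_left z).congr_fun fun n => ?_
  rcases n with _ | n
  · simp
  · rw [Nat.add_sub_cancel, pow_succ]
    ring

/-- The contiguity relation expressing the derivative of `₂F₁(a, a; 1; ·)`. -/
lemma hyp_contiguous (a z : ℂ) (hz : ‖z‖ < 1) :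
    ∃ F' : ℂ, HasDerivAt (hyp a a 1) F' z ∧
      z * (1 - z) * F' = (1 - a) * hyp (a - 1) a 1 z + (a - 1 + a * z) * hyp a a 1 z := by
  obtain ⟨F', hd, hs⟩ := hyp_hasDerivAt a a z hz
  refine ⟨F', hd, ?_⟩
  have h0 := hyp_hasSum a a z hz
  have hm := hyp_hasSum (a - 1) a z hz
  have hL := (hs.sub (hm.mul_left (1 - a))).sub (h0.mul_left (a - 1))
  have hR := (hs.add (h0.mul_left a)).mul_left z
  rw [← hasSum_nat_add_iff' 1] at hL
  have := hL.unique (hR.congr_fun fun n => ?_)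
  · simp only [Finset.range_one, Finset.sum_singleton, hypCoeff_zero] at this
    push_cast at this
    linear_combination this
  · have h2 : (n : ℂ) + 1 ≠ 0 := by exact_mod_cast n.succ_ne_zero
    rw [hypCoeff_succ, hypCoeff_sub_one_succ, pow_succ]
    push_cast
    field_simp
    ring

/-- the second equivalent form of the kernel `K₀` (Lemma 8.1 of the paper). -/
theorem K0_second_form (H : ℝ) (hH : 0 < H) (M : ℂ) (t : ℝ) (ht : 0 < t)
    (r : ℝ) (hr : 0 ≤ r) (h : H * r < 1 - Real.exp (-(H * t))) :
    K0 H M r t =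
      (4 : ℂ) ^ (-(M / (H : ℂ))) * Complex.exp (M * (t : ℂ)) *
          (((Real.exp (-(H * t)) + 1) ^ 2 - H ^ 2 * r ^ 2 : ℝ) : ℂ) ^ (M / (H : ℂ) - 1 / 2) /
          (((1 - Real.exp (-(H * t))) ^ 2 - H ^ 2 * r ^ 2 : ℝ) : ℂ) *
        (((H : ℂ) * ((Real.exp (-(H * t)) : ℝ) : ℂ) - (H : ℂ) +
              M * ((Real.exp (-(2 * H * t)) : ℝ) : ℂ) - M - (H : ℂ) ^ 2 * M * (r : ℂ) ^ 2) *
            hyp (1 / 2 - M / (H : ℂ)) (1 / 2 - M / (H : ℂ)) 1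
              ((((Real.exp (-(H * t)) - 1) ^ 2 - H ^ 2 * r ^ 2) /
                ((Real.exp (-(H * t)) + 1) ^ 2 - H ^ 2 * r ^ 2) : ℝ) : ℂ) +
          ((H : ℂ) / 2 + M) *
              ((H : ℂ) ^ 2 * (r : ℂ) ^ 2 - ((Real.exp (-(2 * H * t)) : ℝ) : ℂ) + 1) *
            hyp (-(1 / 2) - M / (H : ℂ)) (1 / 2 - M / (H : ℂ)) 1
              ((((Real.exp (-(H * t)) - 1) ^ 2 - H ^ 2 * r ^ 2) /
                ((Real.exp (-(H * t)) + 1) ^ 2 - H ^ 2 * r ^ 2) : ℝ) : ℂ)) := by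
  obtain ⟨y, hy⟩ : ∃ y : ℝ, Real.exp (-(H * t)) = y := ⟨_, rfl⟩
  have hy0 : 0 < y := hy ▸ Real.exp_pos _
  have hy2 : Real.exp (-(2 * H * t)) = y ^ 2 := by
    rw [← hy, ← Real.exp_nat_mul]
    congr 1
    push_cast
    ring
  rw [hy] at h
  have hHr : 0 ≤ H * r := by positivity
  have hN : 0 < (1 - y) ^ 2 - H ^ 2 * r ^ 2 := by nlinarith
  have hD : 0 < (1 + y) ^ 2 - H ^ 2 * r ^ 2 := by nlinarith
  set D : ℝ := (1 + y) ^ 2 - H ^ 2 * r ^ 2 with hDdef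
  set N : ℝ := (1 - y) ^ 2 - H ^ 2 * r ^ 2 with hNdef
  have hHC : (H : ℂ) ≠ 0 := by exact_mod_cast hH.ne'
  have hDC : (D : ℂ) ≠ 0 := by exact_mod_cast hD.ne'
  have hNC : (N : ℂ) ≠ 0 := by exact_mod_cast hN.ne'
  have hyC : (y : ℂ) ≠ 0 := by exact_mod_cast hy0.ne'
  have hz : ‖((N / D : ℝ) : ℂ)‖ < 1 := by
    rw [Complex.norm_real, Real.norm_of_nonneg (by positivity), div_lt_one hD]
    simp only [hDdef, hNdef]
    nlinarith
  set a : ℂ := 1 / 2 - M / (H : ℂ) with ha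
  obtain ⟨F', hF, hrel⟩ := hyp_contiguous a ((N / D : ℝ) : ℂ) hz
  have hx : HasDerivAt (fun b : ℝ => Real.exp (-(H * b))) (-H) 0 := by
    simpa using ((hasDerivAt_id (0 : ℝ)).const_mul H).neg.exp
  have hx0 : Real.exp (-(H * 0)) = 1 := by simp
  have dD : HasDerivAt (fun b : ℝ => (Real.exp (-(H * b)) + y) ^ 2 - H ^ 2 * r ^ 2)
      (-2 * H * (1 + y)) 0 := by
    refine (((hx.add_const y).pow 2).sub_const _).congr_deriv ?_
    simp
    ring
  have dN : HasDerivAt (fun b : ℝ => (Real.exp (-(H * b)) - y) ^ 2 - H ^ 2 * r ^ 2)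
      (-2 * H * (1 - y)) 0 := by
    refine (((hx.sub_const y).pow 2).sub_const _).congr_deriv ?_
    simp
    ring
  have dQ := dN.div dD (by rw [hx0]; exact hD.ne')
  rw [hx0, ← hDdef, ← hNdef] at dQ
  have dexp : HasDerivAt (fun b : ℝ => Complex.exp (M * ((b : ℂ) + (t : ℂ))))
      (Complex.exp (M * t) * M) 0 := by
    simpa using (((hasDerivAt_id (0 : ℝ)).ofReal_comp.add_const (t : ℂ)).const_mul M).cexp
  have dpow : HasDerivAt (fun b : ℝ =>
      (((Real.exp (-(H * b)) + y) ^ 2 - H ^ 2 * r ^ 2 : ℝ) : ℂ) ^ (M / (H : ℂ) - 1 / 2))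
      ((M / (H : ℂ) - 1 / 2) * (D : ℂ) ^ (M / (H : ℂ) - 1 / 2 - 1) *
        ((-2 * H * (1 + y) : ℝ) : ℂ)) 0 := by
    have hD0 : (Real.exp (-(H * 0)) + y) ^ 2 - H ^ 2 * r ^ 2 = D := by rw [hx0]
    refine HasDerivAt.comp (h₂ := fun w : ℂ => w ^ (M / (H : ℂ) - 1 / 2)) (0 : ℝ) ?_
      dD.ofReal_comp
    rw [hD0]
    exact (Complex.hasStrictDerivAt_cpow_const (Complex.ofReal_mem_slitPlane.2 hD)).hasDerivAt
  have dhyp : HasDerivAt (fun b : ℝ => hyp a a 1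
      (((((Real.exp (-(H * b)) - y) ^ 2 - H ^ 2 * r ^ 2) /
        ((Real.exp (-(H * b)) + y) ^ 2 - H ^ 2 * r ^ 2) : ℝ)) : ℂ))
      (F' * (((-2 * H * (1 - y) * D - N * (-2 * H * (1 + y))) / D ^ 2 : ℝ) : ℂ)) 0 := by
    refine HasDerivAt.comp (h₂ := hyp a a 1) (0 : ℝ) ?_ dQ.ofReal_comp
    simpa only [Pi.div_apply, hx0] using hF
  have dE := ((dexp.const_mul ((4 : ℂ) ^ (-(M / (H : ℂ))))).mul dpow).mul dhyp
  have hE : HasDerivAt (fun b => Eker H M r t b) _ 0 :=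
    dE.congr_of_eventuallyEq (.of_forall fun b => by simp only [Eker, hy, ha, Pi.mul_apply])
  rw [K0, hE.deriv]
  rw [hy, hy2, show (y + 1) ^ 2 - H ^ 2 * r ^ 2 = D by rw [hDdef]; ring,
    show (y - 1) ^ 2 - H ^ 2 * r ^ 2 = N by rw [hNdef]; ring,
    show -(1 / 2) - M / (H : ℂ) = a - 1 by rw [ha]; ring]
  simp only [Pi.mul_apply, hx0]
  rw [← hDdef, ← hNdef, Complex.ofReal_zero, zero_add]
  have hDc : (D : ℂ) = (1 + (y : ℂ)) ^ 2 - (H : ℂ) ^ 2 * (r : ℂ) ^ 2 := by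
    rw [hDdef]
    push_cast
    rfl
  have hNc : (N : ℂ) = (1 - (y : ℂ)) ^ 2 - (H : ℂ) ^ 2 * (r : ℂ) ^ 2 := by
    rw [hNdef]
    push_cast
    rfl
  have hM : M = (H : ℂ) * (1 / 2 - a) := by
    rw [ha]
    field_simp
    ring
  have hp : M / (H : ℂ) - 1 / 2 = -a := by rw [ha]; ring
  rw [hp, show (D : ℂ) ^ (-a - 1) = (D : ℂ) ^ (-a) / D by
    rw [Complex.cpow_sub _ _ hDC, Complex.cpow_one]]
  push_cast at hrel ⊢
  generalize hyp a a 1 ((N : ℂ) / (D : ℂ)) = F at *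
  generalize hyp (a - 1) a 1 ((N : ℂ) / (D : ℂ)) = G at *
  generalize (D : ℂ) ^ (-a) = q at *
  generalize (4 : ℂ) ^ (-(M / (H : ℂ))) = P at *
  generalize Complex.exp (M * (t : ℂ)) = e at *
  clear_value a D N
  generalize (D : ℂ) = Dc at *
  generalize (N : ℂ) = Nc at *
  generalize (y : ℂ) = u at *
  generalize (r : ℂ) = rc at *
  generalize (H : ℂ) = Hc at *
  -- Multiplying the chain-rule term by `ζ (1 - ζ) = 4 y N / D²` lets the contiguity relation apply.
  have hchain : F' * ((-2 * Hc * (1 - u) * Dc - Nc * (-2 * Hc * (1 + u))) / Dc ^ 2) =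
      -(Hc * (Hc ^ 2 * rc ^ 2 - u ^ 2 + 1) / Nc) *
        ((1 - a) * G + (a - 1 + a * (Nc / Dc)) * F) := by
    rw [← hrel]
    have h1 : 1 - Nc / Dc = 4 * u / Dc := by
      rw [one_sub_div hDC, hDc, hNc]
      ring
    rw [h1]
    field_simp
    rw [hDc, hNc]
    ring
  rw [hchain, hM]
  field_simp
  rw [hDc, hNc]
  ring
end

section
/- Let H > 0 and let μ > 0 be a real number with μ ≠ H/2. There exists a constant C > 0, depending only on μ and H, such that for all 0 ≤ b < t: ∫₀^{(e^{−Hb} − e^{−Ht})/H} ((e^{−bH} + e^{−Ht})² − H²r²)^{μ/H − 3/2} dr ≤ C·e^{−t(μ − H/2)}·e^{−b(μ − 3H/2)} if μ < H/2, and ∫₀^{(e^{−Hb} − e^{−Ht})/H} ((e^{−bH} + e^{−Ht})² − H²r²)^{μ/H − 3/2} dr ≤ C·e^{−2(μ − H)b} if μ > H/2. -/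
/-!
Put `x = e^{-Hb}`, `y = e^{-Ht}`, `s = x + y` and `a = μ/H - 3/2`, so that `0 < y < x`.
The integrand factors as `(s - Hr)^a (s + Hr)^a`. On the range of integration `s + Hr` lies
between `x` and `4x`, hence `(s + Hr)^a ≤ (1 + 4^a) x^a` (`rpow_le_of_le_four_mul`), while the
first factor is integrated exactly:
`∫ (s - Hr)^a dr = (s^{a+1} - (2y)^{a+1}) / (H (a+1))`.
For `μ < H/2`, i.e. `a + 1 < 0`, the term with `(2y)^{a+1}` dominates and gives `x^a y^{a+1}`;
for `μ > H/2`, i.e. `a + 1 > 0`, the term with `s^{a+1} ≤ (2x)^{a+1}` dominates and gives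
`x^{2a+1}`. These are the two exponential bounds.
-/

lemma rpow_le_of_le_four_mul {x z : ℝ} (a : ℝ) (hx : 0 < x) (h1 : x ≤ z) (h4 : z ≤ 4 * x) :
    z ^ a ≤ (1 + (4 : ℝ) ^ a) * x ^ a := by
  have hxa : 0 < x ^ a := Real.rpow_pos_of_pos hx a
  have h4a : 0 < (4 : ℝ) ^ a := by positivity
  rcases le_total 0 a with ha | ha
  · have h := Real.rpow_le_rpow (by linarith) h4 ha
    rw [Real.mul_rpow (by norm_num) hx.le] at h
    nlinarith
  · have h := Real.rpow_le_rpow_of_nonpos hx h1 ha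
    nlinarith

/-- The bound on the integral before the sign of `a + 1` is used: the factor `(s + H r) ^ a` is
estimated by a multiple of `x ^ a`, and the factor `(s - H r) ^ a` is integrated exactly. -/
lemma integral_le_of_ne {H x y a : ℝ} (hH : 0 < H) (hy : 0 < y) (hyx : y < x) (ha : a ≠ -1) :
    (∫ r in (0 : ℝ)..((x - y) / H), ((x + y) ^ 2 - H ^ 2 * r ^ 2) ^ a) ≤
      (1 + (4 : ℝ) ^ a) * x ^ a * (H⁻¹ * (((x + y) ^ (a + 1) - (2 * y) ^ (a + 1)) / (a + 1))) := by
  have hx : 0 < x := hy.trans hyx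
  have hR : 0 ≤ (x - y) / H := div_nonneg (by linarith) hH.le
  have hHr : ∀ r ∈ Set.Icc (0 : ℝ) ((x - y) / H), 0 ≤ H * r ∧ H * r ≤ x - y := by
    intro r hr
    refine ⟨mul_nonneg hH.le hr.1, ?_⟩
    have := (le_div_iff₀ hH).1 hr.2
    linarith
  have hint : (∫ r in (0 : ℝ)..((x - y) / H), (x + y - H * r) ^ a) =
      H⁻¹ * (((x + y) ^ (a + 1) - (2 * y) ^ (a + 1)) / (a + 1)) := by
    rw [intervalIntegral.integral_comp_sub_mul (fun u : ℝ => u ^ a) hH.ne' (x + y)]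
    have e1 : x + y - H * ((x - y) / H) = 2 * y := by field_simp; ring
    have e2 : x + y - H * 0 = x + y := by ring
    rw [e1, e2, integral_rpow, smul_eq_mul]
    refine Or.inr ⟨ha, ?_⟩
    rw [Set.uIcc_of_le (by linarith)]
    intro h
    linarith [h.1]
  rw [← hint, ← intervalIntegral.integral_const_mul]
  apply intervalIntegral.integral_mono_on hR
  · apply ContinuousOn.intervalIntegrable
    rw [Set.uIcc_of_le hR]
    apply ContinuousOn.rpow_const (by fun_prop)
    intro r hr
    left
    obtain ⟨h0, h1⟩ := hHr r hr
    have : 0 < (x + y - H * r) * (x + y + H * r) := mul_pos (by linarith) (by linarith)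
    nlinarith
  · apply ContinuousOn.intervalIntegrable
    rw [Set.uIcc_of_le hR]
    apply ContinuousOn.mul continuousOn_const
    apply ContinuousOn.rpow_const (by fun_prop)
    intro r hr
    left
    obtain ⟨h0, h1⟩ := hHr r hr
    linarith
  · intro r hr
    obtain ⟨h0, h1⟩ := hHr r hr
    have e : (x + y) ^ 2 - H ^ 2 * r ^ 2 = (x + y + H * r) * (x + y - H * r) := by ring
    rw [e, Real.mul_rpow (by linarith) (by linarith)]
    exact mul_le_mul_of_nonneg_right
      (rpow_le_of_le_four_mul a hx (by linarith) (by linarith))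
      (Real.rpow_nonneg (by linarith) a)


/-- Lemma in Section 6 of the paper: for `μ > 0`, `μ ≠ H/2`, there is
`C = C_{μ,H} > 0` such that for all `0 ≤ b < t`:
`∫₀^{(e^{−Hb}−e^{−Ht})/H} ((e^{−bH}+e^{−Ht})² − H²r²)^{μ/H − 3/2} dr
  ≤ C e^{−t(μ−H/2)} e^{−b(μ−3H/2)}` if `μ < H/2`, and `≤ C e^{−2(μ−H)b}` if `μ > H/2`. -/
theorem E_derivative_base_integral_estimate (H μ : ℝ) (hH : 0 < H) (hμ : 0 < μ)
    (hμ2 : μ ≠ H / 2) :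
    ∃ C > (0 : ℝ), ∀ b t : ℝ, 0 ≤ b → b < t →
      (μ < H / 2 →
        (∫ r in (0 : ℝ)..((Real.exp (-(H * b)) - Real.exp (-(H * t))) / H),
            ((Real.exp (-(b * H)) + Real.exp (-(H * t))) ^ 2 - H ^ 2 * r ^ 2) ^
              (μ / H - 3 / 2)) ≤
          C * Real.exp (-(t * (μ - H / 2))) * Real.exp (-(b * (μ - 3 * H / 2)))) ∧
      (H / 2 < μ →
        (∫ r in (0 : ℝ)..((Real.exp (-(H * b)) - Real.exp (-(H * t))) / H),
            ((Real.exp (-(b * H)) + Real.exp (-(H * t))) ^ 2 - H ^ 2 * r ^ 2) ^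
              (μ / H - 3 / 2)) ≤
          C * Real.exp (-(2 * (μ - H) * b))) := by
  have ha1 : μ / H - 3 / 2 + 1 = (μ - H / 2) / H := by field_simp; ring
  have hne : (μ - H / 2) / H ≠ 0 := div_ne_zero (sub_ne_zero.2 hμ2) hH.ne'
  obtain ⟨a, ha⟩ : ∃ a, a = μ / H - 3 / 2 := ⟨_, rfl⟩
  rw [← ha] at ha1
  have hane : a + 1 ≠ 0 := ha1 ▸ hne
  have haH : a * H = μ - 3 * H / 2 := by rw [ha]; field_simp
  have h4a : 0 < 1 + (4 : ℝ) ^ a := by positivity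
  have h2a : 0 < (2 : ℝ) ^ (a + 1) := by positivity
  have habs : 0 < |a + 1| := abs_pos.2 hane
  rw [← ha]
  refine ⟨(1 + (4 : ℝ) ^ a) * (H⁻¹ * ((2 : ℝ) ^ (a + 1) / |a + 1|)), by positivity, ?_⟩
  intro b t _ hbt
  have hyx : Real.exp (-(H * t)) < Real.exp (-(H * b)) :=
    Real.exp_lt_exp.2 (by nlinarith)
  have hkey := integral_le_of_ne (a := a) hH (Real.exp_pos (-(H * t))) hyx
    (fun h => hane (by rw [h]; norm_num))
  rw [mul_comm b H]
  have ey : Real.exp (-(H * t)) ^ (a + 1) = Real.exp (-(t * (μ - H / 2))) := by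
    rw [← Real.exp_mul]
    congr 1
    linear_combination (-t) * haH
  have ex : Real.exp (-(H * b)) ^ a = Real.exp (-(b * (μ - 3 * H / 2))) := by
    rw [← Real.exp_mul]
    congr 1
    linear_combination (-b) * haH
  have exx : Real.exp (-(H * b)) ^ a * Real.exp (-(H * b)) ^ (a + 1) =
      Real.exp (-(2 * (μ - H) * b)) := by
    rw [← Real.exp_mul, ← Real.exp_mul, ← Real.exp_add]
    congr 1
    linear_combination (-2 * b) * haH
  have hx := Real.exp_pos (-(H * b))
  have hy := Real.exp_pos (-(H * t))
  rw [← exx, ← ey, ← ex]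
  generalize Real.exp (-(H * b)) = x at *
  generalize Real.exp (-(H * t)) = y at *
  have hxa : 0 < x ^ a := Real.rpow_pos_of_pos hx a
  constructor
  · intro hlt
    have hneg : a + 1 < 0 := by rw [ha1]; exact div_neg_of_neg_of_pos (by linarith) hH
    have hs : 0 < (x + y) ^ (a + 1) := Real.rpow_pos_of_pos (by linarith) _
    have hb : ((x + y) ^ (a + 1) - (2 * y) ^ (a + 1)) / (a + 1) ≤
        (2 : ℝ) ^ (a + 1) * y ^ (a + 1) / |a + 1| := by
      rw [← Real.mul_rpow (by norm_num) hy.le, abs_of_neg hneg, ← neg_div_neg_eq]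
      exact div_le_div_of_nonneg_right (by linarith) (by linarith)
    calc _ ≤ _ := hkey
      _ ≤ (1 + (4 : ℝ) ^ a) * x ^ a *
          (H⁻¹ * ((2 : ℝ) ^ (a + 1) * y ^ (a + 1) / |a + 1|)) := by gcongr
      _ = _ := by ring
  · intro hlt
    have hpos : 0 < a + 1 := by rw [ha1]; exact div_pos (by linarith) hH
    have hs : 0 < (2 * y) ^ (a + 1) := Real.rpow_pos_of_pos (by linarith) _
    have hs2 : (x + y) ^ (a + 1) ≤ (2 * x) ^ (a + 1) :=
      Real.rpow_le_rpow (by linarith) (by linarith) hpos.le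
    have hb : ((x + y) ^ (a + 1) - (2 * y) ^ (a + 1)) / (a + 1) ≤
        (2 : ℝ) ^ (a + 1) * x ^ (a + 1) / |a + 1| := by
      rw [← Real.mul_rpow (by norm_num) hx.le, abs_of_pos hpos]
      exact div_le_div_of_nonneg_right (by linarith) hpos.le
    calc _ ≤ _ := hkey
      _ ≤ (1 + (4 : ℝ) ^ a) * x ^ a *
          (H⁻¹ * ((2 : ℝ) ^ (a + 1) * x ^ (a + 1) / |a + 1|)) := by gcongr
      _ = _ := by ring
end
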